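/- Let G be a connected bipartite finite simple graph on vertex set V = {v_1,...,v_n} with bipartition (V_1, V_2). Then there exist a finite family A_1,...,A_r of proper subsets of V_1 and a subset I ⊆ {i : v_i ∈ V_2}, unique as a pair, such that the edge cone satisfies R+A = aff(R+A) ∩ (∩_{k=1}^r H_{A_k}^-) ∩ (∩_{i ∈ I} {x ∈ R^n : x_i ≥ 0}), where aff(R+A) is the affine hull of the edge cone, and this representation is irreducible: omitting any single halfspace H_{A_k}^- or {x_i ≥ 0} from the intersection yields a set strictly larger than R+A. -/

import Mathlib

open Finset

/-- The edge vector `e_i + e_j` associated to an edge `{i, j}`. -/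
def edgeVector {V : Type*} [DecidableEq V] (i j : V) : V → ℝ :=
  fun k => (if k = i then 1 else 0) + (if k = j then 1 else 0)

/-- The edge cone of a graph `G`: all nonnegative real linear combinations of the
edge vectors of `G`. -/
def edgeCone {V : Type*} [Fintype V] [DecidableEq V] (G : SimpleGraph V) :
    Set (V → ℝ) :=
  { x | ∃ c : V → V → ℝ, (∀ i j, 0 ≤ c i j) ∧ (∀ i j, ¬ G.Adj i j → c i j = 0) ∧
        x = ∑ i, ∑ j, c i j • edgeVector i j }

/-- The neighbor set `N(A)`: vertices adjacent to at least one vertex of `A`. -/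
def nbr {V : Type*} [Fintype V] [DecidableEq V] (G : SimpleGraph V)
    [DecidableRel G.Adj] (A : Finset V) : Finset V :=
  Finset.univ.filter fun v => ∃ a ∈ A, G.Adj v a

/-- `A` is an independent set of vertices of `G`. -/
def IsIndep {V : Type*} (G : SimpleGraph V) (A : Finset V) : Prop :=
  ∀ a ∈ A, ∀ b ∈ A, ¬ G.Adj a b

/-- `F` is a face of the cone `Q`: `F = Q ∩ {x | ⟪x, a⟫ = 0}` for some `a` with
`Q ⊆ {x | ⟪x, a⟫ ≤ 0}`. -/
def IsFace {V : Type*} [Fintype V] (Q F : Set (V → ℝ)) : Prop :=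
  ∃ a : V → ℝ, (∀ x ∈ Q, ∑ i, x i * a i ≤ 0) ∧ F = Q ∩ {x | ∑ i, x i * a i = 0}

/-- `F` is a facet of the cone `Q`: a face whose linear span has dimension one less
than the dimension of the linear span of `Q`. -/
def IsFacet {V : Type*} [Fintype V] (Q F : Set (V → ℝ)) : Prop :=
  IsFace Q F ∧
    Module.finrank ℝ (Submodule.span ℝ F) = Module.finrank ℝ (Submodule.span ℝ Q) - 1

section helpers

open Filter Topology

theorem eps_exists {E K : Type*} [AddCommGroup E] [Module ℝ E] (F : K → E →ₗ[ℝ] ℝ)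
    (T : Finset K) (q w : E) (h : ∀ l ∈ T, 0 < F l q) :
    ∃ ε : ℝ, 0 < ε ∧ ∀ l ∈ T, 0 ≤ F l (q + ε • w) := by
  have h1 : ∀ᶠ ε in 𝓝[>] (0 : ℝ), ∀ l ∈ T, 0 ≤ F l (q + ε • w) := by
    rw [Filter.eventually_all_finset]
    intro l hl
    have hc : Continuous (fun ε : ℝ => F l q + ε * F l w) := by fun_prop
    have h2 : ∀ᶠ ε in 𝓝 (0 : ℝ), 0 < F l q + ε * F l w :=
      (hc.continuousAt (x := 0)).eventually (lt_mem_nhds (by simpa using h l hl))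
    filter_upwards [nhdsWithin_le_nhds h2] with ε hε
    simpa using hε.le
  obtain ⟨ε, h2, h3⟩ := (h1.and self_mem_nhdsWithin).exists
  exact ⟨ε, h3, h2⟩

theorem irr_subset {E K : Type*} [AddCommGroup E] [Module ℝ E] [DecidableEq K]
    (F : K → E →ₗ[ℝ] ℝ) (W : Submodule ℝ E) (p : E) (hp : p ∈ W) (Q : Set E)
    (S T : Finset K)
    (hS : ∀ x, x ∈ Q ↔ x ∈ W ∧ ∀ k ∈ S, 0 ≤ F k x)
    (hT : ∀ x, x ∈ Q ↔ x ∈ W ∧ ∀ k ∈ T, 0 ≤ F k x)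
    (hSp : ∀ k ∈ S, 0 < F k p) (hTp : ∀ k ∈ T, 0 < F k p)
    (hirr : ∀ k ∈ S, ∃ z ∈ W, (∀ j ∈ S.erase k, 0 ≤ F j z) ∧ F k z < 0)
    (hdist : ∀ k ∈ S, ∀ l ∈ T, ∀ c : ℝ, 0 < c → (∀ w ∈ W, F l w = c * F k w) → k = l) :
    S ⊆ T := by
  intro k hk
  obtain ⟨z, hzW, hz, hkz⟩ := hirr k hk
  have hkp := hSp k hk
  set q : E := (-F k z) • p + (F k p) • z with hq
  have hqW : q ∈ W := W.add_mem (W.smul_mem _ hp) (W.smul_mem _ hzW)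
  have hkq : F k q = 0 := by simp [hq]; ring
  have hjq : ∀ j ∈ S.erase k, 0 < F j q := by
    intro j hj
    have h1 := hz j hj
    have h2 := hSp j (Finset.mem_of_mem_erase hj)
    simp only [hq, map_add, map_smul, smul_eq_mul]
    have : 0 < -F k z * F j p := mul_pos (by linarith) h2
    have : 0 ≤ F k p * F j z := mul_nonneg hkp.le h1
    linarith
  have hqQ : q ∈ Q := by
    rw [hS]
    refine ⟨hqW, fun j hj => ?_⟩
    by_cases hjk : j = k
    · rw [hjk, hkq]
    · exact (hjq j (Finset.mem_erase.2 ⟨hjk, hj⟩)).le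
  have hex : ∃ l ∈ T, F l q ≤ 0 := by
    by_contra! hcon
    obtain ⟨ε, hε, h⟩ := eps_exists F T q z hcon
    have h1 : q + ε • z ∈ Q := (hT _).2 ⟨W.add_mem hqW (W.smul_mem _ hzW), h⟩
    have h2 := ((hS _).1 h1).2 k hk
    simp only [map_add, map_smul, smul_eq_mul, hkq] at h2
    nlinarith
  obtain ⟨l, hl, hlq⟩ := hex
  have hlq0 : F l q = 0 := le_antisymm hlq (((hT _).1 hqQ).2 l hl)
  have hnn : ∀ w ∈ W, F k w = 0 → 0 ≤ F l w := by
    intro w hw hkw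
    obtain ⟨ε, hε, h⟩ := eps_exists F (S.erase k) q w hjq
    have h1 : q + ε • w ∈ Q := by
      rw [hS]
      refine ⟨W.add_mem hqW (W.smul_mem _ hw), fun j hj => ?_⟩
      by_cases hjk : j = k
      · simp [hjk, hkq, hkw]
      · exact h j (Finset.mem_erase.2 ⟨hjk, hj⟩)
    have h2 := ((hT _).1 h1).2 l hl
    simp only [map_add, map_smul, smul_eq_mul, hlq0, zero_add] at h2
    exact nonneg_of_mul_nonneg_right h2 hε
  have hz0 : ∀ w ∈ W, F k w = 0 → F l w = 0 := by
    intro w hw hkw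
    have h1 := hnn w hw hkw
    have h2 := hnn (-w) (W.neg_mem hw) (by simp [hkw])
    simp at h2
    linarith
  have := hdist k hk l hl (F l p / F k p) (div_pos (hTp l hl) hkp) (by
    intro w hw
    have h1 := hz0 (w - (F k w / F k p) • p) (W.sub_mem hw (W.smul_mem _ hp))
      (by simp [hkp.ne'])
    simp only [map_sub, map_smul, smul_eq_mul] at h1
    field_simp
    field_simp at h1
    linarith)
  exact this ▸ hl

def IrrRep {E K : Type*} [AddCommGroup E] [Module ℝ E] [DecidableEq K]
    (F : K → E →ₗ[ℝ] ℝ) (W : Set E) (Q : Set E) (S : Finset K) : Prop :=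
  (∀ x, x ∈ Q ↔ x ∈ W ∧ ∀ k ∈ S, 0 ≤ F k x) ∧
  ∀ k ∈ S, ¬ (∀ x, x ∈ Q ↔ x ∈ W ∧ ∀ j ∈ S.erase k, 0 ≤ F j x)

theorem IrrRep.wit {E K : Type*} [AddCommGroup E] [Module ℝ E] [DecidableEq K]
    {F : K → E →ₗ[ℝ] ℝ} {W : Set E} {Q : Set E} {S : Finset K} (h : IrrRep F W Q S) :
    ∀ k ∈ S, ∃ z ∈ W, (∀ j ∈ S.erase k, 0 ≤ F j z) ∧ F k z < 0 := by
  intro k hk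
  by_contra! hcon
  apply h.2 k hk
  intro x
  rw [h.1]
  constructor
  · rintro ⟨h1, h2⟩
    exact ⟨h1, fun j hj => h2 j (Finset.mem_of_mem_erase hj)⟩
  · rintro ⟨h1, h2⟩
    refine ⟨h1, fun j hj => ?_⟩
    by_cases hjk : j = k
    · exact hjk ▸ hcon x h1 h2
    · exact h2 j (Finset.mem_erase.2 ⟨hjk, hj⟩)

theorem irr_existsUnique {E K : Type*} [AddCommGroup E] [Module ℝ E] [DecidableEq K]
    (F : K → E →ₗ[ℝ] ℝ) (W : Submodule ℝ E) (p : E) (hp : p ∈ W) (Q : Set E)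
    (K0 : Finset K)
    (hQ : ∀ x, x ∈ Q ↔ x ∈ W ∧ ∀ k ∈ K0, 0 ≤ F k x)
    (hpos : ∀ k ∈ K0, (∀ w ∈ W, F k w = 0) ∨ 0 < F k p)
    (hdist : ∀ k ∈ K0, ∀ l ∈ K0, 0 < F k p → 0 < F l p →
      ∀ c : ℝ, 0 < c → (∀ w ∈ W, F l w = c * F k w) → k = l) :
    ∃! S : Finset K, S ⊆ K0 ∧ IrrRep F W Q S := by
  have hpos' : ∀ S ⊆ K0, IrrRep F W Q S → ∀ k ∈ S, 0 < F k p := by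
    intro S hS hirr k hk
    rcases hpos k (hS hk) with h | h
    · obtain ⟨z, hz, -, h2⟩ := hirr.wit k hk
      exact absurd (h z hz) h2.ne
    · exact h
  have hsub : ∀ S T : Finset K, S ⊆ K0 → T ⊆ K0 → IrrRep F W Q S → IrrRep F W Q T → S ⊆ T := by
    intro S T hS hT h1 h2
    refine irr_subset F W p hp Q S T h1.1 h2.1 (hpos' S hS h1) (hpos' T hT h2) h1.wit ?_
    intro k hk l hl
    exact hdist k (hS hk) l (hT hl) (hpos' S hS h1 k hk) (hpos' T hT h2 l hl)
  have hex : ∃ S : Finset K, S ⊆ K0 ∧ IrrRep F W Q S := by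
    classical
    obtain ⟨S, hSm, hmin⟩ := Finset.exists_min_image
      (K0.powerset.filter (fun S => ∀ x, x ∈ Q ↔ x ∈ W ∧ ∀ k ∈ S, 0 ≤ F k x)) Finset.card
      ⟨K0, by simpa using hQ⟩
    simp only [Finset.mem_filter, Finset.mem_powerset] at hSm hmin
    refine ⟨S, hSm.1, hSm.2, fun k hk hcon => ?_⟩
    have := hmin (S.erase k) ⟨(Finset.erase_subset _ _).trans hSm.1, hcon⟩
    exact absurd (Finset.card_erase_lt_of_mem hk) (not_lt.2 this)
  obtain ⟨S, hS, hirr⟩ := hex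
  refine ⟨S, ⟨hS, hirr⟩, ?_⟩
  rintro T ⟨hT, hT2⟩
  exact Finset.Subset.antisymm (hsub _ _ hT hS hT2 hirr) (hsub _ _ hS hT hirr hT2)


theorem edgeVector_eq {V : Type*} [DecidableEq V] (i j : V) :
    edgeVector i j = Pi.single i 1 + Pi.single j (1 : ℝ) := by
  ext k
  simp [edgeVector, Pi.single_apply]

theorem edgeVector_mem {V : Type*} [Fintype V] [DecidableEq V] (G : SimpleGraph V)
    {i j : V} (h : G.Adj i j) : edgeVector i j ∈ edgeCone G := by
  refine ⟨fun a b => if a = i ∧ b = j then 1 else 0, ?_, ?_, ?_⟩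
  · intro a b; dsimp only; split_ifs <;> norm_num
  · intro a b hab
    dsimp only
    rw [if_neg]
    rintro ⟨rfl, rfl⟩
    exact hab h
  · rw [Finset.sum_eq_single i, Finset.sum_eq_single j]
    · simp
    · intro b _ hb; simp [hb]
    · simp
    · intro b _ hb; simp [hb]
    · simp

theorem cone_nonneg {V : Type*} [Fintype V] [DecidableEq V] (G : SimpleGraph V)
    (f : (V → ℝ) →ₗ[ℝ] ℝ) (hf : ∀ i j, G.Adj i j → 0 ≤ f (edgeVector i j)) :
    ∀ x ∈ edgeCone G, 0 ≤ f x := by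
  rintro x ⟨c, hc, hc0, rfl⟩
  simp only [map_sum, map_smul, smul_eq_mul]
  refine Finset.sum_nonneg fun i _ => Finset.sum_nonneg fun j _ => ?_
  by_cases h : G.Adj i j
  · exact mul_nonneg (hc i j) (hf i j h)
  · simp [hc0 i j h]

theorem zero_mem_cone {V : Type*} [Fintype V] [DecidableEq V] (G : SimpleGraph V) :
    (0 : V → ℝ) ∈ edgeCone G := ⟨0, by simp, by simp, by simp⟩

theorem smul_mem_cone {V : Type*} [Fintype V] [DecidableEq V] (G : SimpleGraph V)
    {x : V → ℝ} (hx : x ∈ edgeCone G) {t : ℝ} (ht : 0 ≤ t) : t • x ∈ edgeCone G := by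
  obtain ⟨c, hc, hc0, rfl⟩ := hx
  refine ⟨fun i j => t * c i j, fun i j => mul_nonneg ht (hc i j), ?_, ?_⟩
  · intro i j h; simp [hc0 i j h]
  · simp [Finset.smul_sum, mul_smul]

theorem add_mem_cone {V : Type*} [Fintype V] [DecidableEq V] (G : SimpleGraph V)
    {x y : V → ℝ} (hx : x ∈ edgeCone G) (hy : y ∈ edgeCone G) : x + y ∈ edgeCone G := by
  obtain ⟨c, hc, hc0, rfl⟩ := hx
  obtain ⟨d, hd, hd0, rfl⟩ := hy
  refine ⟨fun i j => c i j + d i j, fun i j => add_nonneg (hc i j) (hd i j), ?_, ?_⟩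
  · intro i j h; simp [hc0 i j h, hd0 i j h]
  · simp [Finset.sum_add_distrib, add_smul]

theorem convex_cone {V : Type*} [Fintype V] [DecidableEq V] (G : SimpleGraph V) :
    Convex ℝ (edgeCone G) := by
  intro x hx y hy a b ha hb _
  exact add_mem_cone G (smul_mem_cone G hx ha) (smul_mem_cone G hy hb)

theorem cone_coeff_le {V : Type*} [Fintype V] [DecidableEq V]
    (c : V → V → ℝ) (hc : ∀ i j, 0 ≤ c i j) (i j : V) :
    c i j ≤ (∑ i, ∑ j, c i j • edgeVector i j) i := by
  have hn : ∀ a b k : V, 0 ≤ edgeVector a b k := by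
    intro a b k; unfold edgeVector; split_ifs <;> norm_num
  have hnn : ∀ a b : V, 0 ≤ c a b * edgeVector a b i := fun a b => mul_nonneg (hc a b) (hn a b i)
  have h1 : c i j ≤ c i j * edgeVector i j i := by
    have : (1 : ℝ) ≤ edgeVector i j i := by
      unfold edgeVector; split_ifs <;> norm_num at *
    nlinarith [hc i j]
  simp only [Finset.sum_apply, Pi.smul_apply, smul_eq_mul]
  calc c i j ≤ c i j * edgeVector i j i := h1
    _ ≤ ∑ b, c i b * edgeVector i b i :=
        Finset.single_le_sum (f := fun b => c i b * edgeVector i b i)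
          (fun b _ => hnn i b) (Finset.mem_univ j)
    _ ≤ _ := Finset.single_le_sum (f := fun a => ∑ b, c a b * edgeVector a b i)
          (fun a _ => Finset.sum_nonneg fun b _ => hnn a b) (Finset.mem_univ i)

theorem isClosed_cone {V : Type*} [Fintype V] [DecidableEq V] (G : SimpleGraph V) :
    IsClosed (edgeCone G) := by
  rw [← closure_subset_iff_isClosed]
  intro x hx
  set M : ℝ := (∑ i, |x i|) + 1 with hM
  let C : Set (V → V → ℝ) := Set.Icc 0 (fun _ _ => M) ∩ {c | ∀ i j, ¬ G.Adj i j → c i j = 0}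
  have hC : IsCompact C := by
    apply isCompact_Icc.inter_right
    simp only [Set.ofPred_forall]
    refine isClosed_iInter fun i => isClosed_iInter fun j => isClosed_iInter fun _ => ?_
    exact isClosed_eq (by fun_prop) continuous_const
  let Φ : (V → V → ℝ) → (V → ℝ) := fun c => ∑ i, ∑ j, c i j • edgeVector i j
  have hΦ : Continuous Φ := by fun_prop
  have hK : IsClosed (Φ '' C) := (hC.image hΦ).isClosed
  let U : Set (V → ℝ) := {y | ∀ i, y i < M}
  have hU : IsOpen U := by
    simp only [U, Set.ofPred_forall]
    exact isOpen_iInter_of_finite fun i => isOpen_lt (continuous_apply i) continuous_const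
  have hxU : x ∈ U := by
    intro i
    have h1 : |x i| ≤ ∑ i, |x i| :=
      Finset.single_le_sum (f := fun i => |x i|) (fun i _ => abs_nonneg _) (Finset.mem_univ i)
    have := le_abs_self (x i)
    linarith
  have h1 : x ∈ closure (U ∩ edgeCone G) := hU.inter_closure ⟨hxU, hx⟩
  have h2 : U ∩ edgeCone G ⊆ Φ '' C := by
    rintro y ⟨hyU, c, hc, hc0, rfl⟩
    refine ⟨c, ⟨⟨fun i j => hc i j, fun i j => ?_⟩, hc0⟩, rfl⟩
    exact (cone_coeff_le c hc i j).trans (hyU i).le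
  obtain ⟨c, ⟨hc1, hc2⟩, rfl⟩ := closure_minimal h2 hK h1
  exact ⟨c, fun i j => hc1.1 i j, hc2, rfl⟩

theorem farkas_cone {V : Type*} [Fintype V] [DecidableEq V] (G : SimpleGraph V)
    (x : V → ℝ)
    (h : ∀ y : V → ℝ, (∀ i j, G.Adj i j → 0 ≤ y i + y j) → 0 ≤ ∑ i, y i * x i) :
    x ∈ edgeCone G := by
  by_contra hx
  obtain ⟨f, u, hfu, hf⟩ :=
    geometric_hahn_banach_point_closed (convex_cone G) (isClosed_cone G) hx
  have hu : u < 0 := by simpa using hf 0 (zero_mem_cone G)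
  have hfx : f x = ∑ i, f (Pi.single i 1) * x i := by
    conv_lhs => rw [pi_eq_sum_univ' x]
    rw [map_sum]
    refine Finset.sum_congr rfl fun i _ => ?_
    rw [map_smul, smul_eq_mul, mul_comm]
  have := h (fun i => f (Pi.single i 1)) (by
    intro i j hij
    rw [← map_add, ← edgeVector_eq]
    by_contra! hneg
    have h1 := hf _ (smul_mem_cone G (edgeVector_mem G hij)
      (t := u / f (edgeVector i j)) (div_nonneg_of_nonpos hu.le hneg.le))
    rw [map_smul, smul_eq_mul, div_mul_cancel₀ _ hneg.ne] at h1
    exact lt_irrefl _ h1)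
  linarith

theorem integral_step (m M w x : ℝ) (h1 : m ≤ w) (h2 : w ≤ M) :
    ∫ t in m..M, (if t ≤ w then x else 0) = (w - m) * x := by
  have h : (fun t : ℝ => if t ≤ w then x else 0) = Set.indicator (Set.Iic w) (fun _ => x) := by
    ext t; simp [Set.indicator_apply]
  rw [h, intervalIntegral.integral_of_le (h1.trans h2),
    MeasureTheory.setIntegral_indicator measurableSet_Iic, Set.Ioc_inter_Iic, min_eq_right h2,
    MeasureTheory.setIntegral_const]
  simp [h1]

theorem intervalIntegrable_step (m M w x : ℝ) :
    IntervalIntegrable (fun t => if t ≤ w then x else 0) MeasureTheory.volume m M := by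
  have h : (fun t : ℝ => if t ≤ w then x else 0) = Set.indicator (Set.Iic w) (fun _ => x) := by
    ext t; simp [Set.indicator_apply]
  rw [h, intervalIntegrable_iff]
  exact (MeasureTheory.integrableOn_const (by simp)).indicator measurableSet_Iic

theorem cone_complete {V : Type*} [Fintype V] [DecidableEq V] (G : SimpleGraph V)
    [DecidableRel G.Adj] (V₁ V₂ : Finset V) (hdisj : Disjoint V₁ V₂)
    (hunion : V₁ ∪ V₂ = Finset.univ)
    (hbip : ∀ i j, G.Adj i j → (i ∈ V₁ ∧ j ∈ V₂) ∨ (i ∈ V₂ ∧ j ∈ V₁))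
    (x : V → ℝ) (hsum : ∑ i ∈ V₁, x i = ∑ i ∈ V₂, x i)
    (hA : ∀ A ⊆ V₁, ∑ i ∈ A, x i ≤ ∑ i ∈ nbr G A, x i)
    (h0 : ∀ i ∈ V₂, 0 ≤ x i) : x ∈ edgeCone G := by
  apply farkas_cone
  intro y hy
  set M : ℝ := ∑ i, |y i| with hM
  have hyM : ∀ i, |y i| ≤ M := fun i =>
    Finset.single_le_sum (f := fun i => |y i|) (fun i _ => abs_nonneg _) (Finset.mem_univ i)
  have hM0 : 0 ≤ M := Finset.sum_nonneg fun i _ => abs_nonneg _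
  have e1 : ∫ t in (-M)..M, (∑ i ∈ V₁, if t ≤ -y i then x i else 0)
      = ∑ i ∈ V₁, (-y i - -M) * x i := by
    rw [intervalIntegral.integral_finsetSum fun i _ => intervalIntegrable_step _ _ _ _]
    refine Finset.sum_congr rfl fun i _ => integral_step _ _ _ _ ?_ ?_
    · have := abs_le.1 (hyM i); linarith
    · have := abs_le.1 (hyM i); linarith
  have e2 : ∫ t in (-M)..M, (∑ i ∈ V₂, if t ≤ y i then x i else 0)
      = ∑ i ∈ V₂, (y i - -M) * x i := by
    rw [intervalIntegral.integral_finsetSum fun i _ => intervalIntegrable_step _ _ _ _]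
    refine Finset.sum_congr rfl fun i _ => integral_step _ _ _ _ ?_ ?_
    · have := abs_le.1 (hyM i); linarith
    · have := abs_le.1 (hyM i); linarith
  have hle : ∫ t in (-M)..M, (∑ i ∈ V₁, if t ≤ -y i then x i else 0)
      ≤ ∫ t in (-M)..M, (∑ i ∈ V₂, if t ≤ y i then x i else 0) := by
    apply intervalIntegral.integral_mono_on (by linarith)
    · have e : (fun t : ℝ => ∑ i ∈ V₁, if t ≤ -y i then x i else 0)
          = ∑ i ∈ V₁, fun t : ℝ => if t ≤ -y i then x i else 0 := by
        ext t; simp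
      rw [e]
      exact IntervalIntegrable.sum V₁ (fun i _ => intervalIntegrable_step _ _ _ _)
    · have e : (fun t : ℝ => ∑ i ∈ V₂, if t ≤ y i then x i else 0)
          = ∑ i ∈ V₂, fun t : ℝ => if t ≤ y i then x i else 0 := by
        ext t; simp
      rw [e]
      exact IntervalIntegrable.sum V₂ (fun i _ => intervalIntegrable_step _ _ _ _)
    · intro t _
      rw [← Finset.sum_filter, ← Finset.sum_filter]
      refine (hA _ (Finset.filter_subset _ _)).trans ?_
      refine Finset.sum_le_sum_of_subset_of_nonneg ?_ ?_
      · intro j hj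
        simp only [nbr, Finset.mem_filter, Finset.mem_univ, true_and] at hj ⊢
        obtain ⟨a, ⟨ha, hta⟩, hja⟩ := hj
        have := hy j a hja
        refine ⟨?_, by linarith⟩
        rcases hbip j a hja with h | h
        · exact absurd h.2 (Finset.disjoint_left.1 hdisj ha)
        · exact h.1
      · intro i hi _
        exact h0 i (Finset.mem_filter.1 hi).1
  rw [e1, e2] at hle
  rw [← hunion, Finset.sum_union hdisj]
  simp only [sub_mul, Finset.sum_sub_distrib, ← Finset.mul_sum, hsum, neg_mul,
    Finset.sum_neg_distrib] at hle
  linarith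

/-- The linear functionals of the representation. -/
noncomputable def Fl {V : Type*} [Fintype V] [DecidableEq V] (G : SimpleGraph V)
    [DecidableRel G.Adj] : Finset V ⊕ V → (V → ℝ) →ₗ[ℝ] ℝ
  | Sum.inl A => ∑ i ∈ nbr G A, LinearMap.proj i - ∑ i ∈ A, LinearMap.proj i
  | Sum.inr i => LinearMap.proj i

theorem Fl_inl {V : Type*} [Fintype V] [DecidableEq V] (G : SimpleGraph V)
    [DecidableRel G.Adj] (A : Finset V) (x : V → ℝ) :
    Fl G (Sum.inl A) x = ∑ i ∈ nbr G A, x i - ∑ i ∈ A, x i := by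
  simp [Fl]

theorem Fl_inr {V : Type*} [Fintype V] [DecidableEq V] (G : SimpleGraph V)
    [DecidableRel G.Adj] (i : V) (x : V → ℝ) :
    Fl G (Sum.inr i) x = x i := by
  simp [Fl]

theorem Fl_inl_single {V : Type*} [Fintype V] [DecidableEq V] (G : SimpleGraph V)
    [DecidableRel G.Adj] (A : Finset V) (i : V) :
    Fl G (Sum.inl A) (Pi.single i 1) =
      (if i ∈ nbr G A then 1 else 0) - (if i ∈ A then 1 else 0) := by
  rw [Fl_inl]
  simp [Pi.single_apply]

theorem Fl_edge_nonneg {V : Type*} [Fintype V] [DecidableEq V] (G : SimpleGraph V)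
    [DecidableRel G.Adj] (k : Finset V ⊕ V) (i j : V) (h : G.Adj i j) :
    0 ≤ Fl G k (edgeVector i j) := by
  cases k with
  | inl A =>
    rw [edgeVector_eq, map_add, Fl_inl_single, Fl_inl_single]
    have h1 : i ∈ A → j ∈ nbr G A := fun hi => by
      simp only [nbr, Finset.mem_filter, Finset.mem_univ, true_and]; exact ⟨i, hi, h.symm⟩
    have h2 : j ∈ A → i ∈ nbr G A := fun hi => by
      simp only [nbr, Finset.mem_filter, Finset.mem_univ, true_and]; exact ⟨j, hi, h⟩
    by_cases a : i ∈ A <;> by_cases b : j ∈ A <;> by_cases c : i ∈ nbr G A <;>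
      by_cases d : j ∈ nbr G A <;> simp_all
  | inr l =>
    rw [Fl_inr]
    unfold edgeVector
    split_ifs <;> norm_num

theorem antisymm_of_connected {V : Type*} (G : SimpleGraph V) (hG : G.Connected)
    (V₁ V₂ : Finset V) (hdisj : Disjoint V₁ V₂)
    (hbip : ∀ i j, G.Adj i j → (i ∈ V₁ ∧ j ∈ V₂) ∨ (i ∈ V₂ ∧ j ∈ V₁))
    (d : V → ℝ) (hd : ∀ i j, G.Adj i j → d i + d j = 0) :
    ∀ i j, i ∈ V₁ → j ∈ V₁ → d i = d j := by
  classical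
  let g : V → ℝ := fun i => if i ∈ V₁ then d i else - d i
  have hadj : ∀ i j, G.Adj i j → g i = g j := by
    intro i j h
    have h0 := hd i j h
    rcases hbip i j h with ⟨h1, h2⟩ | ⟨h1, h2⟩
    · have : j ∉ V₁ := Finset.disjoint_right.1 hdisj h2
      simp only [g, h1, this, if_true, if_false]; linarith
    · have : i ∉ V₁ := Finset.disjoint_right.1 hdisj h1
      simp only [g, h2, this, if_true, if_false]; linarith
  have hwalk : ∀ i j, G.Walk i j → g i = g j := by
    intro i j w
    induction w with
    | nil => rfl
    | cons h _ ih => exact (hadj _ _ h).trans ih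
  intro i j hi hj
  obtain ⟨w⟩ := hG.preconnected i j
  simpa [g, hi, hj] using hwalk i j w

theorem pair_rep {n : ℕ} (G : SimpleGraph (Fin n)) [DecidableRel G.Adj]
    (W : Set (Fin n → ℝ)) (Q : Set (Fin n → ℝ)) (P : Finset (Finset (Fin n))) (I : Finset (Fin n)) :
    Q = W ∩ (⋂ A ∈ P, {x : Fin n → ℝ | ∑ i ∈ A, x i ≤ ∑ i ∈ nbr G A, x i}) ∩
          (⋂ i ∈ I, {x : Fin n → ℝ | 0 ≤ x i}) ↔
    ∀ x, x ∈ Q ↔ x ∈ W ∧ ∀ k ∈ P.disjSum I, 0 ≤ Fl G k x := by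
  rw [Set.ext_iff]
  refine forall_congr' fun x => ?_
  simp [Fl_inl, Fl_inr, and_assoc]

theorem cone_unique_finset {n : ℕ} (G : SimpleGraph (Fin n)) [DecidableRel G.Adj]
    (hG : G.Connected)
    (V₁ V₂ : Finset (Fin n)) (hdisj : Disjoint V₁ V₂)
    (hunion : V₁ ∪ V₂ = Finset.univ)
    (hbip : ∀ i j, G.Adj i j → (i ∈ V₁ ∧ j ∈ V₂) ∨ (i ∈ V₂ ∧ j ∈ V₁)) :
    ∃! S : Finset (Finset (Fin n) ⊕ Fin n), S ⊆ V₁.ssubsets.disjSum V₂ ∧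
      IrrRep (Fl G) (affineSpan ℝ (edgeCone G) : Set (Fin n → ℝ)) (edgeCone G) S := by
  set Q := edgeCone G with hQdef
  have haff : (affineSpan ℝ Q : Set (Fin n → ℝ)) = (Submodule.span ℝ Q : Set _) := by
    have := affineSpan_insert_zero (k := ℝ) Q
    rwa [Set.insert_eq_of_mem (zero_mem_cone G)] at this
  rw [haff]
  let p : Fin n → ℝ := ∑ i, ∑ j, (if G.Adj i j then (1 : ℝ) else 0) • edgeVector i j
  have hpQ : p ∈ Q := by
    refine ⟨fun i j => if G.Adj i j then (1 : ℝ) else 0, ?_, ?_, rfl⟩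
    · intro i j; dsimp only; split_ifs <;> norm_num
    · intro i j h; simp [h]
  have hedge : ∀ i j, G.Adj i j → edgeVector i j ∈ Submodule.span ℝ Q := fun i j h =>
    Submodule.subset_span (edgeVector_mem G h)
  -- functional vanishing on edges vanish on the span
  have hvan : ∀ f : (Fin n → ℝ) →ₗ[ℝ] ℝ, (∀ i j, G.Adj i j → f (edgeVector i j) = 0) →
      ∀ w ∈ Submodule.span ℝ Q, f w = 0 := by
    intro f hf w hw
    have : Submodule.span ℝ Q ≤ LinearMap.ker f := by
      rw [Submodule.span_le]
      intro x hx
      have h1 := cone_nonneg G f (fun i j h => (hf i j h).ge) x hx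
      have h2 := cone_nonneg G (-f) (fun i j h => by simp [hf i j h]) x hx
      simp only [LinearMap.neg_apply] at h2
      simp only [SetLike.mem_coe, LinearMap.mem_ker]
      linarith
    exact this hw
  have hpos : ∀ k, (∀ w ∈ Submodule.span ℝ Q, Fl G k w = 0) ∨ 0 < Fl G k p := by
    intro k
    by_cases h0 : ∀ i j, G.Adj i j → Fl G k (edgeVector i j) = 0
    · exact Or.inl (hvan _ h0)
    · right
      push Not at h0
      obtain ⟨i, j, hij, hne⟩ := h0
      have hgt : 0 < Fl G k (edgeVector i j) :=
        lt_of_le_of_ne (Fl_edge_nonneg G k i j hij) (Ne.symm hne)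
      have hnn : ∀ a b, 0 ≤ (if G.Adj a b then (1 : ℝ) else 0) * Fl G k (edgeVector a b) := by
        intro a b
        split_ifs with h
        · simpa using Fl_edge_nonneg G k a b h
        · simp
      simp only [p, map_sum, map_smul, smul_eq_mul]
      refine Finset.sum_pos' (fun a _ => Finset.sum_nonneg fun b _ => hnn a b)
        ⟨i, Finset.mem_univ _, ?_⟩
      refine Finset.sum_pos' (fun b _ => hnn i b) ⟨j, Finset.mem_univ _, ?_⟩
      simpa [hij] using hgt
  refine irr_existsUnique (Fl G) (Submodule.span ℝ Q) p (Submodule.subset_span hpQ) Q _ ?_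
    (fun k _ => hpos k) ?_
  · intro x
    constructor
    · intro hx
      exact ⟨Submodule.subset_span hx, fun k _ => cone_nonneg G _ (Fl_edge_nonneg G k) x hx⟩
    · rintro ⟨hx, hk⟩
      let s : (Fin n → ℝ) →ₗ[ℝ] ℝ := ∑ i ∈ V₁, LinearMap.proj i - ∑ i ∈ V₂, LinearMap.proj i
      have hs : s x = 0 := by
        refine hvan s ?_ x hx
        intro i j h
        have hss : ∀ i, s (Pi.single i 1) = (if i ∈ V₁ then 1 else 0) - (if i ∈ V₂ then 1 else 0) := by
          intro i
          simp [s, Pi.single_apply]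
        rw [edgeVector_eq, map_add, hss, hss]
        rcases hbip i j h with ⟨h1, h2⟩ | ⟨h1, h2⟩
        · simp [h1, h2, Finset.disjoint_left.1 hdisj h1, Finset.disjoint_right.1 hdisj h2]
        · simp [h1, h2, Finset.disjoint_left.1 hdisj h2, Finset.disjoint_right.1 hdisj h1]
      have hsum : ∑ i ∈ V₁, x i = ∑ i ∈ V₂, x i := by
        simp only [s, LinearMap.sub_apply, LinearMap.sum_apply, LinearMap.proj_apply] at hs
        linarith
      by_cases hE : ∃ i j, G.Adj i j
      · have hN : nbr G V₁ = V₂ := by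
          ext v
          simp only [nbr, Finset.mem_filter, Finset.mem_univ, true_and]
          constructor
          · rintro ⟨a, ha, hva⟩
            rcases hbip v a hva with h | h
            · exact absurd h.2 (Finset.disjoint_left.1 hdisj ha)
            · exact h.1
          · intro hv
            obtain ⟨i, j, hij⟩ := hE
            have hnt : Nontrivial (Fin n) := ⟨i, j, hij.ne⟩
            obtain ⟨u, hu⟩ := hG.preconnected.exists_adj_of_nontrivial v
            refine ⟨u, ?_, hu⟩
            rcases hbip v u hu with h | h
            · exact absurd hv (Finset.disjoint_left.1 hdisj h.1)
            · exact h.2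
        refine cone_complete G V₁ V₂ hdisj hunion hbip x hsum ?_ ?_
        · intro A hA
          by_cases hAV : A = V₁
          · rw [hAV, hN, hsum]
          · have := hk (Sum.inl A) (by
              simp only [Finset.inl_mem_disjSum, Finset.mem_ssubsets]
              exact Finset.ssubset_iff_subset_ne.2 ⟨hA, hAV⟩)
            rw [Fl_inl] at this
            linarith
        · intro i hi
          have := hk (Sum.inr i) (by simpa using hi)
          rwa [Fl_inr] at this
      · push Not at hE
        have hx0 : x = 0 := by
          ext i
          exact hvan (LinearMap.proj i) (fun a b h => absurd h (hE a b)) x hx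
        rw [hx0]
        exact zero_mem_cone G
  · intro k hk l hl hkp hlp c hc hprop
    have hd : ∀ i j, i ∈ V₁ → j ∈ V₁ → (Fl G l - c • Fl G k) (Pi.single i 1)
        = (Fl G l - c • Fl G k) (Pi.single j 1) := by
      refine antisymm_of_connected G hG V₁ V₂ hdisj hbip
        (fun i => (Fl G l - c • Fl G k) (Pi.single i 1)) ?_
      intro i j h
      rw [← map_add, ← edgeVector_eq]
      simp [hprop _ (hedge i j h)]
    have hne : ∀ A, 0 < Fl G (Sum.inl A) p → A.Nonempty := by
      intro A hA
      by_contra hcon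
      rw [Finset.not_nonempty_iff_eq_empty] at hcon
      subst hcon
      rw [Fl_inl] at hA
      simp [nbr] at hA
    have hnb : ∀ A ⊆ V₁, ∀ i ∈ V₁, i ∉ nbr G A := by
      intro A hA i hi hcon
      simp only [nbr, Finset.mem_filter, Finset.mem_univ, true_and] at hcon
      obtain ⟨a, ha, hia⟩ := hcon
      rcases hbip i a hia with h | h
      · exact absurd h.2 (Finset.disjoint_left.1 hdisj (hA ha))
      · exact absurd h.1 (Finset.disjoint_left.1 hdisj hi)
    have hval : ∀ A ⊆ V₁, ∀ i ∈ V₁, Fl G (Sum.inl A) (Pi.single i 1)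
        = - (if i ∈ A then 1 else 0) := by
      intro A hA i hi
      rw [Fl_inl_single, if_neg (hnb A hA i hi)]; ring
    have hval2 : ∀ j ∈ V₂, ∀ i ∈ V₁, Fl G (Sum.inr j) (Pi.single i 1) = 0 := by
      intro j hj i hi
      rw [Fl_inr, Pi.single_apply, if_neg]
      rintro rfl
      exact Finset.disjoint_left.1 hdisj hi hj
    have hV1 : V₁.Nonempty := by
      by_contra hcon
      rw [Finset.not_nonempty_iff_eq_empty] at hcon
      have hE : ∀ i j, ¬ G.Adj i j := by
        intro i j h
        have := hbip i j h
        simp [hcon] at this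
      have := hvan (Fl G k) (fun a b h => absurd h (hE a b)) p (Submodule.subset_span hpQ)
      exact hkp.ne' this
    simp only [LinearMap.sub_apply, LinearMap.smul_apply, smul_eq_mul] at hd
    rcases k with B | j' <;> rcases l with A | j <;>
      simp only [Finset.inl_mem_disjSum, Finset.inr_mem_disjSum, Finset.mem_ssubsets] at hk hl
    · congr 1
      obtain ⟨b, hb⟩ := hne B hkp
      obtain ⟨e, he, heB⟩ := Finset.exists_of_ssubset hk
      have key : ∀ b ∈ B, ∀ e ∈ V₁, e ∉ B → b ∈ A ∧ e ∉ A := by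
        intro b hb e he heB
        have h1 := hd b e (hk.1 hb) he
        rw [hval A hl.1 b (hk.1 hb), hval A hl.1 e he, hval B hk.1 b (hk.1 hb), hval B hk.1 e he,
          if_pos hb, if_neg heB] at h1
        by_cases x1 : b ∈ A <;> by_cases x2 : e ∈ A <;> simp [x1, x2] at h1 ⊢ <;> linarith
      ext i
      constructor
      · intro hi
        exact (key i hi e he heB).1
      · intro hi
        by_contra hiB
        exact (key b hb i (hl.1 hi) hiB).2 hi
    · exfalso
      obtain ⟨b, hb⟩ := hne B hkp
      obtain ⟨e, he, heB⟩ := Finset.exists_of_ssubset hk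
      have h1 := hd b e (hk.1 hb) he
      rw [hval2 j hl b (hk.1 hb), hval2 j hl e he, hval B hk.1 b (hk.1 hb), hval B hk.1 e he,
          if_pos hb, if_neg heB] at h1
      linarith
    · exfalso
      obtain ⟨b, hb⟩ := hne A hlp
      obtain ⟨e, he, heB⟩ := Finset.exists_of_ssubset hl
      have h1 := hd b e (hl.1 hb) he
      rw [hval2 j' hk b (hl.1 hb), hval2 j' hk e he, hval A hl.1 b (hl.1 hb), hval A hl.1 e he,
          if_pos hb, if_neg heB] at h1
      linarith
    · congr 1
      by_contra hjj
      -- `j` has a neighbour `u` in `V₁`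
      obtain ⟨v, hv⟩ := hV1
      have hnt : Nontrivial (Fin n) := ⟨j, j', fun h => hjj h.symm⟩
      obtain ⟨u, hu⟩ := hG.preconnected.exists_adj_of_nontrivial j
      have huV : u ∈ V₁ := by
        rcases hbip j u hu with h | h
        · exact absurd hl (Finset.disjoint_left.1 hdisj h.1)
        · exact h.2
      have h1 := hprop _ (hedge j u hu)
      rw [edgeVector_eq, map_add, map_add, hval2 j hl u huV, hval2 j' hk u huV, Fl_inr, Fl_inr] at h1
      simp [hjj] at h1

end helpers

/-- For a connected bipartite graph `G` with bipartition `(V₁, V₂)` there is a unique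
pair consisting of a family of proper subsets of `V₁` and a set of vertices of `V₂`
giving an irreducible representation
`ℝ₊𝒜 = aff(ℝ₊𝒜) ∩ (∩ₖ H_{Aₖ}⁻) ∩ (∩_{i ∈ I} {x | xᵢ ≥ 0})` of the edge cone,
where omitting any single halfspace gives a strictly larger set. -/
theorem stmt14 {n : ℕ} (G : SimpleGraph (Fin n)) [DecidableRel G.Adj]
    (hG : G.Connected)
    (V₁ V₂ : Finset (Fin n)) (hdisj : Disjoint V₁ V₂)
    (hunion : V₁ ∪ V₂ = Finset.univ)
    (hbip : ∀ i j, G.Adj i j → (i ∈ V₁ ∧ j ∈ V₂) ∨ (i ∈ V₂ ∧ j ∈ V₁)) :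
    ∃! p : Finset (Finset (Fin n)) × Finset (Fin n),
      (∀ A ∈ p.1, A ⊆ V₁ ∧ A ≠ V₁) ∧ p.2 ⊆ V₂ ∧
      edgeCone G =
        (affineSpan ℝ (edgeCone G) : Set (Fin n → ℝ)) ∩
          (⋂ A ∈ p.1, {x : Fin n → ℝ | ∑ i ∈ A, x i ≤ ∑ i ∈ nbr G A, x i}) ∩
          (⋂ i ∈ p.2, {x : Fin n → ℝ | 0 ≤ x i}) ∧
      (∀ A ∈ p.1, edgeCone G ≠
        (affineSpan ℝ (edgeCone G) : Set (Fin n → ℝ)) ∩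
          (⋂ B ∈ p.1.erase A, {x : Fin n → ℝ | ∑ i ∈ B, x i ≤ ∑ i ∈ nbr G B, x i}) ∩
          (⋂ i ∈ p.2, {x : Fin n → ℝ | 0 ≤ x i})) ∧
      (∀ j ∈ p.2, edgeCone G ≠
        (affineSpan ℝ (edgeCone G) : Set (Fin n → ℝ)) ∩
          (⋂ A ∈ p.1, {x : Fin n → ℝ | ∑ i ∈ A, x i ≤ ∑ i ∈ nbr G A, x i}) ∩
          (⋂ i ∈ p.2.erase j, {x : Fin n → ℝ | 0 ≤ x i})) := by
  obtain ⟨S, ⟨hS, hirr⟩, huniq⟩ := cone_unique_finset G hG V₁ V₂ hdisj hunion hbip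
  have key : ∀ p : Finset (Finset (Fin n)) × Finset (Fin n),
      ((∀ A ∈ p.1, A ⊆ V₁ ∧ A ≠ V₁) ∧ p.2 ⊆ V₂ ∧
      edgeCone G =
        (affineSpan ℝ (edgeCone G) : Set (Fin n → ℝ)) ∩
          (⋂ A ∈ p.1, {x : Fin n → ℝ | ∑ i ∈ A, x i ≤ ∑ i ∈ nbr G A, x i}) ∩
          (⋂ i ∈ p.2, {x : Fin n → ℝ | 0 ≤ x i}) ∧
      (∀ A ∈ p.1, edgeCone G ≠
        (affineSpan ℝ (edgeCone G) : Set (Fin n → ℝ)) ∩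
          (⋂ B ∈ p.1.erase A, {x : Fin n → ℝ | ∑ i ∈ B, x i ≤ ∑ i ∈ nbr G B, x i}) ∩
          (⋂ i ∈ p.2, {x : Fin n → ℝ | 0 ≤ x i})) ∧
      (∀ j ∈ p.2, edgeCone G ≠
        (affineSpan ℝ (edgeCone G) : Set (Fin n → ℝ)) ∩
          (⋂ A ∈ p.1, {x : Fin n → ℝ | ∑ i ∈ A, x i ≤ ∑ i ∈ nbr G A, x i}) ∩
          (⋂ i ∈ p.2.erase j, {x : Fin n → ℝ | 0 ≤ x i}))) ↔
      (p.1.disjSum p.2 ⊆ V₁.ssubsets.disjSum V₂ ∧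
        IrrRep (Fl G) (affineSpan ℝ (edgeCone G) : Set (Fin n → ℝ)) (edgeCone G)
          (p.1.disjSum p.2)) := by
    rintro ⟨P, I⟩
    have e1 : ∀ A, (P.disjSum I).erase (Sum.inl A) = (P.erase A).disjSum I := by
      intro A; ext (x | x) <;> simp
    have e2 : ∀ j, (P.disjSum I).erase (Sum.inr j) = P.disjSum (I.erase j) := by
      intro A; ext (x | x) <;> simp
    have e3 : P.disjSum I ⊆ V₁.ssubsets.disjSum V₂ ↔ (∀ A ∈ P, A ⊆ V₁ ∧ A ≠ V₁) ∧ I ⊆ V₂ := by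
      simp only [Finset.subset_iff (s₁ := P.disjSum I), Sum.forall, Finset.inl_mem_disjSum,
        Finset.inr_mem_disjSum, Finset.mem_ssubsets, Finset.ssubset_iff_subset_ne,
        Finset.subset_iff (s₁ := I)]
    simp only [ne_eq, pair_rep, IrrRep, e3, Sum.forall, Finset.inl_mem_disjSum,
      Finset.inr_mem_disjSum, e1, e2, and_assoc]
  refine ⟨(S.toLeft, S.toRight), (key _).2 ?_, ?_⟩
  · simp only [Finset.toLeft_disjSum_toRight]
    exact ⟨hS, hirr⟩
  · intro q hq
    have h := huniq _ ((key q).1 hq)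
    rw [← h]
    simp
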